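/- Let ρ_AB be a density matrix on a bipartite space and α ∈ [1/2,1)∪(1,∞). Then H_α^↓(A|B)_ρ ≤ H̃_α^↓(A|B)_ρ ≤ H^↓_{2−1/α}(A|B)_ρ, where H_γ^↓(A|B)_ρ := −D_γ(ρ_AB ‖ 1_A ⊗ ρ_B) and H̃_γ^↓(A|B)_ρ := −D̃_γ(ρ_AB ‖ 1_A ⊗ ρ_B). -/

import Mathlib

open scoped Kronecker ComplexOrder
open Matrix

/-- Real power of a matrix via the functional calculus on the eigenvalues,
with the convention `0 ^ t = 0` (powers taken on the support). -/
noncomputable def matRpow {n : Type*} [Fintype n] [DecidableEq n]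
    (A : Matrix n n ℂ) (t : ℝ) : Matrix n n ℂ :=
  if hA : A.IsHermitian then
    (hA.eigenvectorUnitary : Matrix n n ℂ) *
      Matrix.diagonal (fun i =>
        ((if hA.eigenvalues i = 0 then (0 : ℝ) else (hA.eigenvalues i) ^ t : ℝ) : ℂ)) *
      star (hA.eigenvectorUnitary : Matrix n n ℂ)
  else 0

/-- Matrix logarithm on the support. -/
noncomputable def matLog {n : Type*} [Fintype n] [DecidableEq n]
    (A : Matrix n n ℂ) : Matrix n n ℂ :=
  if hA : A.IsHermitian then
    (hA.eigenvectorUnitary : Matrix n n ℂ) *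
      Matrix.diagonal (fun i => ((Real.log (hA.eigenvalues i) : ℝ) : ℂ)) *
      star (hA.eigenvectorUnitary : Matrix n n ℂ)
  else 0

/-- Partial trace over the first tensor factor. -/
noncomputable def trFst {a b : Type*} [Fintype a] (M : Matrix (a × b) (a × b) ℂ) :
    Matrix b b ℂ :=
  Matrix.of fun j j' => ∑ i, M (i, j) (i, j')

/-- Partial trace over the second tensor factor. -/
noncomputable def trSnd {a b : Type*} [Fintype b] (M : Matrix (a × b) (a × b) ℂ) :
    Matrix a a ℂ :=
  Matrix.of fun i i' => ∑ j, M (i, j) (i', j)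

/-- Partial trace over the third factor of a tripartite system. -/
noncomputable def trThird {a b c : Type*} [Fintype c]
    (M : Matrix (a × b × c) (a × b × c) ℂ) : Matrix (a × b) (a × b) ℂ :=
  Matrix.of fun p p' => ∑ k, M (p.1, p.2, k) (p'.1, p'.2, k)

/-- Partial trace over the second factor of a tripartite system. -/
noncomputable def trSecond {a b c : Type*} [Fintype b]
    (M : Matrix (a × b × c) (a × b × c) ℂ) : Matrix (a × c) (a × c) ℂ :=
  Matrix.of fun p p' => ∑ j, M (p.1, j, p.2) (p'.1, j, p'.2)

/-- Partial trace over the first two factors of a tripartite system. -/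
noncomputable def trFstSnd {a b c : Type*} [Fintype a] [Fintype b]
    (M : Matrix (a × b × c) (a × b × c) ℂ) : Matrix c c ℂ :=
  Matrix.of fun k k' => ∑ i, ∑ j, M (i, j, k) (i, j, k')

/-- Partial trace over the first and third factors of a tripartite system. -/
noncomputable def trFstThird {a b c : Type*} [Fintype a] [Fintype c]
    (M : Matrix (a × b × c) (a × b × c) ℂ) : Matrix b b ℂ :=
  Matrix.of fun j j' => ∑ i, ∑ k, M (i, j, k) (i, j', k)

/-- Quantum Rényi relative entropy `D_α(ρ‖σ)`. -/
noncomputable def renyiDiv {n : Type*} [Fintype n] [DecidableEq n]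
    (α : ℝ) (ρ σ : Matrix n n ℂ) : ℝ :=
  (α - 1)⁻¹ * Real.log ((matRpow ρ α * matRpow σ (1 - α)).trace.re)

/-- Sandwiched quantum Rényi divergence `D̃_α(ρ‖σ)`. -/
noncomputable def sandwichedRenyiDiv {n : Type*} [Fintype n] [DecidableEq n]
    (α : ℝ) (ρ σ : Matrix n n ℂ) : ℝ :=
  (α - 1)⁻¹ * Real.log
    ((matRpow (matRpow σ ((1 - α) / (2 * α)) * ρ * matRpow σ ((1 - α) / (2 * α))) α).trace.re)

/-- Quantum relative entropy `D(ρ‖σ)`. -/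
noncomputable def relEntropy {n : Type*} [Fintype n] [DecidableEq n]
    (ρ σ : Matrix n n ℂ) : ℝ :=
  (ρ * (matLog ρ - matLog σ)).trace.re


/-!
Both inequalities compare traces of products of powers of `ρ` and `σ`, so `σ = 1 ⊗ ρ_B` enters only
through `tr (ρ σ) = tr ρ_B ^ 2 ≠ 0`, which keeps the logarithms finite.

The first is the Araki–Lieb–Thirring inequality. Let `K = A ^ (d u) B ^ (c u)` with polar
decomposition `K = V |K|`. The trace of `A ^ (d z) B ^ (c z) |K| ^ ((m - z) / u) Vᴴ` is entire in
`z` and equals `tr |K| ^ (m / u)` at `z = u`, and the three lines theorem bounds it by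
`(tr |K| ^ (m / u)) ^ (1 - u)` times a power `u` of a convex combination of
`tr |A ^ d B ^ c| ^ m` and `tr |K| ^ (m / u)`, so the latter is at most the former.

The second is the Hölder inequality (the reverse one if `α < 1`) for `tr (ρ ^ (1 - 1 / α) X)` with
`X = ρ ^ (1 / 2) σ ^ (1 / α - 1) ρ ^ (1 / 2)`: the traces are sums over pairs of eigenvalues of `ρ`
and `X`, weighted by the squared overlaps of the eigenvectors, a doubly stochastic matrix.
-/
section RenyiDivergence

open scoped Matrix.Norms.L2Operator
open Complex.HadamardThreeLines (verticalClosedStrip)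

variable {n : Type*} [Fintype n] [DecidableEq n] {A B : Matrix n n ℂ}

/-- The functional calculus `f ↦ f(A)` of a Hermitian matrix. Unlike `Matrix.IsHermitian.cfc` it
allows complex values, which the complex powers `A ^ z` need. -/
noncomputable def hermCalc (hA : A.IsHermitian) : (ℝ → ℂ) →⋆ₐ[ℂ] Matrix n n ℂ where
  toFun f := Unitary.conjStarAlgAut ℂ _ hA.eigenvectorUnitary (diagonal (f ∘ hA.eigenvalues))
  map_zero' := by simp only [Pi.zero_comp, diagonal_zero', map_zero]
  map_one' := by simp only [Pi.one_comp, diagonal_one', map_one]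
  map_add' f g := by rw [← map_add, diagonal_add]; rfl
  map_mul' f g := by rw [← map_mul, diagonal_mul_diagonal']; rfl
  commutes' c := by
    rw [← AlgHomClass.commutes (Unitary.conjStarAlgAut ℂ _ hA.eigenvectorUnitary) c]
    rfl
  map_star' f := by rw [← map_star, star_eq_conjTranspose, diagonal_conjTranspose]; rfl

lemma hermCalc_apply (hA : A.IsHermitian) (f : ℝ → ℂ) :
    hermCalc hA f = (hA.eigenvectorUnitary : Matrix n n ℂ) * diagonal (f ∘ hA.eigenvalues) *
      (hA.eigenvectorUnitary : Matrix n n ℂ)ᴴ :=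
  rfl

lemma hermCalc_ofReal (hA : A.IsHermitian) : hermCalc hA (fun x => (x : ℂ)) = A :=
  hA.spectral_theorem.symm

lemma hermCalc_congr (hA : A.IsHermitian) {f g : ℝ → ℂ}
    (h : ∀ i, f (hA.eigenvalues i) = g (hA.eigenvalues i)) : hermCalc hA f = hermCalc hA g := by
  rw [hermCalc_apply, hermCalc_apply, show f ∘ hA.eigenvalues = g ∘ hA.eigenvalues from funext h]

lemma trace_hermCalc (hA : A.IsHermitian) (f : ℝ → ℂ) :
    (hermCalc hA f).trace = ∑ i, f (hA.eigenvalues i) := by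
  rw [hermCalc_apply, trace_mul_cycle, ← star_eq_conjTranspose, Unitary.coe_star_mul_self,
    Matrix.one_mul, trace_diagonal]
  rfl

lemma norm_hermCalc (hA : A.IsHermitian) (f : ℝ → ℂ) :
    ‖hermCalc hA f‖ = ‖f ∘ hA.eigenvalues‖ := by
  rw [hermCalc_apply, ← star_eq_conjTranspose, ← Unitary.coe_star, CStarRing.norm_mul_coe_unitary,
    CStarRing.norm_coe_unitary_mul, l2_opNorm_diagonal]

lemma differentiable_hermCalc (hA : A.IsHermitian) {f : ℂ → ℝ → ℂ}
    (hf : ∀ x, Differentiable ℂ fun z => f z x) : Differentiable ℂ fun z => hermCalc hA (f z) := by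
  have h_diag : Differentiable ℂ fun z => diagonal (f z ∘ hA.eigenvalues) := by
    exact (diagonalLinearMap n ℂ ℂ).toContinuousLinearMap.differentiable.comp
      (differentiable_pi.2 fun i => hf (hA.eigenvalues i))
  exact (h_diag.const_mul _).mul_const _

lemma trace_hermCalc_mul_mul_hermCalc_mul (hA : A.IsHermitian) (hB : B.IsHermitian) (f g : ℝ → ℂ)
    (W V : Matrix n n ℂ) :
    (hermCalc hA f * W * hermCalc hB g * V).trace =
      ∑ i, ∑ j, f (hA.eigenvalues i) * g (hB.eigenvalues j) *
        (((hA.eigenvectorUnitary : Matrix n n ℂ)ᴴ * W * hB.eigenvectorUnitary) i j *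
          ((hB.eigenvectorUnitary : Matrix n n ℂ)ᴴ * V * hA.eigenvectorUnitary) j i) := by
  rw [hermCalc_apply, hermCalc_apply]
  generalize (hA.eigenvectorUnitary : Matrix n n ℂ) = U
  generalize (hB.eigenvectorUnitary : Matrix n n ℂ) = U'
  have h_cycle : (U * diagonal (f ∘ hA.eigenvalues) * Uᴴ * W *
        (U' * diagonal (g ∘ hB.eigenvalues) * U'ᴴ) * V).trace =
      (diagonal (f ∘ hA.eigenvalues) * (Uᴴ * W * U') *
        (diagonal (g ∘ hB.eigenvalues) * (U'ᴴ * V * U))).trace := by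
    simp only [Matrix.mul_assoc, trace_mul_comm U]
  rw [h_cycle]
  simp only [Matrix.trace, diag_apply, Matrix.mul_apply (M := diagonal _ * _), diagonal_mul,
    Function.comp_apply]
  exact Finset.sum_congr rfl fun i _ => Finset.sum_congr rfl fun j _ => by ring


/-- The function `x ↦ x ^ z`, extended by `0` to `x ≤ 0` for every exponent `z`, including `z = 0`:
powers of matrices are taken on the support. -/
noncomputable def posPow (z : ℂ) (x : ℝ) : ℂ :=
  if 0 < x then (x : ℂ) ^ z else 0

lemma posPow_mul_posPow (z w : ℂ) : posPow z * posPow w = posPow (z + w) := by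
  ext x
  by_cases hx : 0 < x
  · have h_ne : (x : ℂ) ≠ 0 := mod_cast hx.ne'
    simp only [Pi.mul_apply, posPow, if_pos hx, Complex.cpow_add _ _ h_ne]
  · simp only [Pi.mul_apply, posPow, if_neg hx, mul_zero]

lemma star_posPow (z : ℂ) : star (posPow z) = posPow (star z) := by
  ext x
  by_cases hx : 0 < x
  · have h_arg : (x : ℂ).arg ≠ Real.pi := by
      rw [Complex.arg_ofReal_of_nonneg hx.le]
      exact Real.pi_ne_zero.symm
    simpa [posPow, hx] using (Complex.cpow_conj (x : ℂ) z h_arg).symm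
  · simp only [Pi.star_apply, posPow, if_neg hx, star_zero]

lemma posPow_ofReal {t x : ℝ} (hx : 0 ≤ x) (ht : t ≠ 0) : posPow t x = ((x ^ t : ℝ) : ℂ) := by
  obtain rfl | hx' := hx.eq_or_lt
  · simp only [posPow, lt_irrefl, if_false, Real.zero_rpow ht, Complex.ofReal_zero]
  · simp only [posPow, if_pos hx', Complex.ofReal_cpow hx]

lemma norm_posPow (z : ℂ) (x : ℝ) : ‖posPow z x‖ = ‖posPow z.re x‖ := by
  by_cases hx : 0 < x
  · simp only [posPow, if_pos hx, Complex.norm_cpow_eq_rpow_re_of_pos hx, Complex.ofReal_re]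
  · simp only [posPow, if_neg hx]

lemma norm_posPow_le {x : ℝ} (hx : 0 ≤ x) (z : ℂ) : ‖posPow z x‖ ≤ x ^ z.re := by
  by_cases hx' : 0 < x
  · simp only [posPow, if_pos hx', Complex.norm_cpow_eq_rpow_re_of_pos hx', le_refl]
  · simpa only [posPow, if_neg hx', norm_zero] using Real.rpow_nonneg hx _

lemma differentiable_posPow (x : ℝ) : Differentiable ℂ fun z => posPow z x := by
  by_cases hx : 0 < x
  · simp only [posPow, if_pos hx]
    exact differentiable_id.const_cpow (.inl (mod_cast hx.ne'))
  · simp only [posPow, if_neg hx, differentiable_const]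

/-- The complex power `A ^ z` of a positive semidefinite matrix, taken on its support; in
particular `A ^ 0` is the support projection. -/
noncomputable def psdPow (hA : A.PosSemidef) (z : ℂ) : Matrix n n ℂ :=
  hermCalc hA.1 (posPow z)

lemma psdPow_mul_psdPow (hA : A.PosSemidef) (z w : ℂ) :
    psdPow hA z * psdPow hA w = psdPow hA (z + w) := by
  rw [psdPow, psdPow, psdPow, ← map_mul, posPow_mul_posPow]

lemma psdPow_one (hA : A.PosSemidef) : psdPow hA 1 = A := by
  rw [psdPow]
  conv_rhs => rw [← hermCalc_ofReal hA.1]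
  refine hermCalc_congr hA.1 fun i => ?_
  simpa using posPow_ofReal (hA.eigenvalues_nonneg i) one_ne_zero

lemma conjTranspose_psdPow (hA : A.PosSemidef) (z : ℂ) :
    (psdPow hA z)ᴴ = psdPow hA (star z) := by
  rw [psdPow, psdPow, ← star_eq_conjTranspose, ← map_star, star_posPow]

lemma conjTranspose_psdPow_ofReal (hA : A.PosSemidef) (t : ℝ) :
    (psdPow hA t)ᴴ = psdPow hA t := by
  rw [conjTranspose_psdPow, Complex.star_def, Complex.conj_ofReal]

lemma matRpow_eq_psdPow (hA : A.PosSemidef) (t : ℝ) : matRpow A t = psdPow hA t := by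
  rw [matRpow, dif_pos hA.1, psdPow, hermCalc_apply, star_eq_conjTranspose]
  congr 3
  ext i
  obtain h_zero | h_pos := (hA.eigenvalues_nonneg i).eq_or_lt
  · simp [posPow, ← h_zero]
  · simp [posPow, h_pos, h_pos.ne', Complex.ofReal_cpow h_pos.le]

lemma trace_psdPow_ofReal (hA : A.PosSemidef) {t : ℝ} (ht : t ≠ 0) :
    (psdPow hA t).trace = ((∑ i, hA.1.eigenvalues i ^ t : ℝ) : ℂ) := by
  rw [psdPow, trace_hermCalc, Complex.ofReal_sum]
  exact Finset.sum_congr rfl fun i _ => posPow_ofReal (hA.eigenvalues_nonneg i) ht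

lemma norm_psdPow (hA : A.PosSemidef) (z : ℂ) : ‖psdPow hA z‖ = ‖psdPow hA z.re‖ := by
  simp only [psdPow, norm_hermCalc, Pi.norm_def, Function.comp_apply, nnnorm, norm_posPow z]

lemma norm_psdPow_le_one (hA : A.PosSemidef) {z : ℂ} (hz : z.re = 0) : ‖psdPow hA z‖ ≤ 1 := by
  rw [psdPow, norm_hermCalc, pi_norm_le_iff_of_nonneg zero_le_one]
  intro i
  simpa only [hz, Real.rpow_zero, Function.comp_apply] using
    norm_posPow_le (hA.eigenvalues_nonneg i) z

lemma differentiable_psdPow (hA : A.PosSemidef) : Differentiable ℂ (psdPow hA) :=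
  differentiable_hermCalc hA.1 differentiable_posPow

lemma sum_norm_sq_col_le_one {W : Matrix n n ℂ} (hW : ‖W‖ ≤ 1) (j : n) :
    ∑ i, ‖W i j‖ ^ 2 ≤ 1 := by
  have h_col := (l2_opNorm_mulVec W (EuclideanSpace.single j 1)).trans
    (mul_le_of_le_one_left (norm_nonneg _) hW)
  rw [PiLp.norm_single, norm_one, EuclideanSpace.norm_eq, Real.sqrt_le_one] at h_col
  simpa using h_col

lemma sum_norm_sq_row_le_one {W : Matrix n n ℂ} (hW : ‖W‖ ≤ 1) (i : n) :
    ∑ j, ‖W i j‖ ^ 2 ≤ 1 := by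
  simpa using sum_norm_sq_col_le_one (W := Wᴴ) (by rwa [l2_opNorm_conjTranspose]) i

lemma sum_mul_add_le {ι κ : Type*} [Fintype ι] [Fintype κ] {w : ι → κ → ℝ} {F : ι → ℝ} {G : κ → ℝ}
    (hF : ∀ i, 0 ≤ F i) (hG : ∀ j, 0 ≤ G j) (h_row : ∀ i, ∑ j, w i j ≤ 1)
    (h_col : ∀ j, ∑ i, w i j ≤ 1) :
    ∑ i, ∑ j, w i j * (F i + G j) ≤ ∑ i, F i + ∑ j, G j := by
  simp only [mul_add, Finset.sum_add_distrib]
  rw [Finset.sum_comm (f := fun i j => w i j * G j)]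
  simp only [← Finset.sum_mul]
  gcongr with i _ j _
  · exact mul_le_of_le_one_left (hF i) (h_row i)
  · exact mul_le_of_le_one_left (hG j) (h_col j)

lemma norm_trace_hermCalc_le (hA : A.IsHermitian) (hB : B.IsHermitian) {f g : ℝ → ℂ}
    {W V : Matrix n n ℂ} (hW : ‖W‖ ≤ 1) (hV : ‖V‖ ≤ 1) {F G : n → ℝ} (hF : ∀ i, 0 ≤ F i)
    (hG : ∀ j, 0 ≤ G j)
    (hfg : ∀ i j, ‖f (hA.eigenvalues i)‖ * ‖g (hB.eigenvalues j)‖ ≤ F i + G j) :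
    ‖(hermCalc hA f * W * hermCalc hB g * V).trace‖ ≤ ∑ i, F i + ∑ j, G j := by
  rw [trace_hermCalc_mul_mul_hermCalc_mul]
  set W' := (hA.eigenvectorUnitary : Matrix n n ℂ)ᴴ * W * hB.eigenvectorUnitary with hW'_def
  set V' := (hB.eigenvectorUnitary : Matrix n n ℂ)ᴴ * V * hA.eigenvectorUnitary with hV'_def
  have hW' : ‖W'‖ ≤ 1 := by
    rwa [hW'_def, CStarRing.norm_mul_coe_unitary, ← star_eq_conjTranspose, ← Unitary.coe_star,
      CStarRing.norm_coe_unitary_mul]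
  have hV' : ‖V'‖ ≤ 1 := by
    rwa [hV'_def, CStarRing.norm_mul_coe_unitary, ← star_eq_conjTranspose, ← Unitary.coe_star,
      CStarRing.norm_coe_unitary_mul]
  have h_entry (i j : n) : ‖W' i j‖ * ‖V' j i‖ ≤ (‖W' i j‖ ^ 2 + ‖V' j i‖ ^ 2) / 2 := by
    linarith [two_mul_le_add_sq ‖W' i j‖ ‖V' j i‖]
  calc _ ≤ ∑ i, ∑ j, (‖W' i j‖ ^ 2 + ‖V' j i‖ ^ 2) / 2 * (F i + G j) := by
        refine norm_sum_le_of_le _ fun i _ => norm_sum_le_of_le _ fun j _ => ?_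
        rw [norm_mul, norm_mul, norm_mul, mul_comm]
        exact mul_le_mul (h_entry i j) (hfg i j) (by positivity) (by positivity)
    _ ≤ ∑ i, F i + ∑ j, G j := by
        refine sum_mul_add_le hF hG (fun i => ?_) (fun j => ?_) <;>
          rw [← Finset.sum_div, Finset.sum_add_distrib]
        · linarith [sum_norm_sq_row_le_one hW' i, sum_norm_sq_col_le_one hV' i]
        · linarith [sum_norm_sq_col_le_one hW' j, sum_norm_sq_row_le_one hV' j]

lemma norm_trace_psdPow_mul_le (hA : A.PosSemidef) (t : ℝ) {W : Matrix n n ℂ} (hW : ‖W‖ ≤ 1) :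
    ‖(psdPow hA t * W).trace‖ ≤ ∑ i, hA.1.eigenvalues i ^ t := by
  have h_nonneg (i : n) : 0 ≤ hA.1.eigenvalues i ^ t := Real.rpow_nonneg (hA.eigenvalues_nonneg i) t
  have h_one : ‖(1 : Matrix n n ℂ)‖ ≤ 1 := by
    rw [← diagonal_one, l2_opNorm_diagonal]
    exact (pi_norm_const_le 1).trans norm_one.le
  have h := norm_trace_hermCalc_le hA.1 hA.1 (f := posPow t) (g := 1) (G := 0) hW h_one h_nonneg
    (fun _ => le_rfl) fun i _ => by
      simpa using norm_posPow_le (hA.eigenvalues_nonneg i) t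
  simpa [psdPow] using h

/-- The power `|K| ^ z` of the absolute value `|K| = (Kᴴ * K) ^ (1 / 2)`, taken on its support. -/
noncomputable def absPow (K : Matrix n n ℂ) (z : ℂ) : Matrix n n ℂ :=
  psdPow (posSemidef_conjTranspose_mul_self K) (z / 2)

/-- The `p`-th power `tr |K| ^ p` of the Schatten `p`-norm. -/
noncomputable def schattenPow (p : ℝ) (K : Matrix n n ℂ) : ℝ :=
  ∑ i, (isHermitian_conjTranspose_mul_self K).eigenvalues i ^ (p / 2)

section Schatten

variable (K : Matrix n n ℂ)

lemma absPow_mul_absPow (z w : ℂ) : absPow K z * absPow K w = absPow K (z + w) := by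
  rw [absPow, absPow, absPow, psdPow_mul_psdPow, add_div]

lemma absPow_two : absPow K 2 = Kᴴ * K := by
  rw [absPow, div_self two_ne_zero, psdPow_one]

lemma conjTranspose_absPow (z : ℂ) : (absPow K z)ᴴ = absPow K (star z) := by
  simp only [absPow, conjTranspose_psdPow, Complex.star_def, map_div₀, Complex.conj_ofNat]

lemma norm_absPow (z : ℂ) : ‖absPow K z‖ = ‖absPow K z.re‖ := by
  rw [absPow, absPow, norm_psdPow, Complex.div_ofNat_re, Complex.ofReal_div, Complex.ofReal_ofNat]

lemma norm_absPow_le_one {z : ℂ} (hz : z.re = 0) : ‖absPow K z‖ ≤ 1 :=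
  norm_psdPow_le_one _ (by rw [Complex.div_ofNat_re, hz, zero_div])

lemma differentiable_absPow : Differentiable ℂ (absPow K) :=
  (differentiable_psdPow _).comp (differentiable_id.div_const 2)

lemma trace_absPow_ofReal {p : ℝ} (hp : p ≠ 0) : (absPow K p).trace = (schattenPow p K : ℂ) := by
  rw [absPow, schattenPow, ← trace_psdPow_ofReal _ (div_ne_zero hp two_ne_zero),
    Complex.ofReal_div, Complex.ofReal_ofNat]

lemma norm_trace_absPow_mul_le (p : ℝ) {W : Matrix n n ℂ} (hW : ‖W‖ ≤ 1) :
    ‖(absPow K p * W).trace‖ ≤ schattenPow p K := by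
  simpa [absPow, schattenPow] using
    norm_trace_psdPow_mul_le (posSemidef_conjTranspose_mul_self K) (p / 2) hW

lemma schattenPow_nonneg (p : ℝ) : 0 ≤ schattenPow p K :=
  Finset.sum_nonneg fun i _ =>
    Real.rpow_nonneg ((posSemidef_conjTranspose_mul_self K).eigenvalues_nonneg i) _

lemma schattenPow_pos (p : ℝ) (hK : K ≠ 0) : 0 < schattenPow p K := by
  have hK' := posSemidef_conjTranspose_mul_self K
  have h_ne : hK'.1.eigenvalues ≠ 0 := by
    rwa [Ne, hK'.1.eigenvalues_eq_zero_iff, conjTranspose_mul_self_eq_zero]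
  obtain ⟨i, hi⟩ := Function.ne_iff.1 h_ne
  exact Finset.sum_pos' (fun j _ => Real.rpow_nonneg (hK'.eigenvalues_nonneg j) _)
    ⟨i, Finset.mem_univ i, Real.rpow_pos_of_pos ((hK'.eigenvalues_nonneg i).lt_of_ne' hi) _⟩

lemma schattenPow_two : (schattenPow 2 K : ℂ) = (Kᴴ * K).trace := by
  rw [← absPow_two, ← trace_absPow_ofReal K two_ne_zero, Complex.ofReal_ofNat]

lemma schattenPow_conjTranspose (p : ℝ) : schattenPow p Kᴴ = schattenPow p K := by
  have h_eigenvalues : (isHermitian_conjTranspose_mul_self Kᴴ).eigenvalues =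
      (isHermitian_conjTranspose_mul_self K).eigenvalues := by
    rw [IsHermitian.eigenvalues_eq_eigenvalues_iff, conjTranspose_conjTranspose,
      charpoly_mul_comm]
  rw [schattenPow, schattenPow, h_eigenvalues]

lemma mul_absPow_zero : K * absPow K 0 = K := by
  have h_gram : Kᴴ * K * absPow K 0 = Kᴴ * K := by
    rw [← absPow_two, absPow_mul_absPow, add_zero]
  have h_zero : Kᴴ * K * (1 - absPow K 0) = 0 := by
    rw [Matrix.mul_sub, Matrix.mul_one, h_gram, sub_self]
  rw [conjTranspose_mul_self_mul_eq_zero, Matrix.mul_sub, Matrix.mul_one, sub_eq_zero] at h_zero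
  exact h_zero.symm

lemma exists_polar_decomposition :
    ∃ V : Matrix n n ℂ, ‖V‖ ≤ 1 ∧ V * absPow K 1 = K ∧ Vᴴ * K = absPow K 1 := by
  have h_adjoint : (K * absPow K (-1))ᴴ * K = absPow K 1 := by
    rw [conjTranspose_mul, conjTranspose_absPow, star_neg, star_one, Matrix.mul_assoc, ← absPow_two,
      absPow_mul_absPow]
    norm_num
  have h_sq : ‖K * absPow K (-1)‖ * ‖K * absPow K (-1)‖ ≤ 1 := by
    rw [← l2_opNorm_conjTranspose_mul_self, ← Matrix.mul_assoc, h_adjoint, absPow_mul_absPow]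
    exact norm_absPow_le_one K (by norm_num)
  refine ⟨K * absPow K (-1), ?_, ?_, h_adjoint⟩
  · nlinarith [norm_nonneg (K * absPow K (-1))]
  · rw [Matrix.mul_assoc, absPow_mul_absPow, neg_add_cancel, mul_absPow_zero]

end Schatten

section ArakiLiebThirring

lemma norm_mul_le_one {W V : Matrix n n ℂ} (hW : ‖W‖ ≤ 1) (hV : ‖V‖ ≤ 1) : ‖W * V‖ ≤ 1 :=
  (norm_mul_le_of_le hW hV).trans_eq (one_mul 1)

lemma rpow_half_mul_rpow_le {x y m : ℝ} (hx : 0 ≤ x) (hy : 0 ≤ y) (hm : 1 ≤ m) (u : ℝ) :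
    x ^ (1 / 2 : ℝ) * y ^ ((m - 1) / u / 2) ≤
      1 / m * x ^ (m / 2) + (1 - 1 / m) * y ^ (m / u / 2) := by
  have hm_pos : 0 < m := by linarith
  have h_weight : 0 ≤ 1 - 1 / m := sub_nonneg.2 ((div_le_one hm_pos).2 hm)
  have h_young := Real.geom_mean_le_arith_mean2_weighted (by positivity) h_weight
    (Real.rpow_nonneg hx (m / 2)) (Real.rpow_nonneg hy (m / u / 2)) (add_sub_cancel _ _)
  rw [← Real.rpow_mul hx, ← Real.rpow_mul hy] at h_young
  have hx_exp : m / 2 * (1 / m) = 1 / 2 := by field_simp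
  have hy_exp : m / u / 2 * (1 - 1 / m) = (m - 1) / u / 2 := by field_simp
  rwa [hx_exp, hy_exp] at h_young

lemma norm_trace_absPow_mul_mul_absPow_mul_le {L K W V : Matrix n n ℂ} {m : ℝ} (hm : 1 ≤ m) (u : ℝ)
    (hW : ‖W‖ ≤ 1) (hV : ‖V‖ ≤ 1) :
    ‖(absPow L 1 * W * absPow K ((m - 1) / u : ℝ) * V).trace‖ ≤
      1 / m * schattenPow m L + (1 - 1 / m) * schattenPow (m / u) K := by
  have hL := posSemidef_conjTranspose_mul_self L
  have hK := posSemidef_conjTranspose_mul_self K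
  have h_weight : 0 ≤ 1 - 1 / m := sub_nonneg.2 ((div_le_one (by linarith)).2 hm)
  rw [schattenPow, schattenPow, Finset.mul_sum, Finset.mul_sum]
  refine norm_trace_hermCalc_le hL.1 hK.1 hW hV
    (fun i => mul_nonneg (by positivity) (Real.rpow_nonneg (hL.eigenvalues_nonneg i) _))
    (fun j => mul_nonneg h_weight (Real.rpow_nonneg (hK.eigenvalues_nonneg j) _)) fun i j => ?_
  have hx := hL.eigenvalues_nonneg i
  have hy := hK.eigenvalues_nonneg j
  refine le_trans ?_ (rpow_half_mul_rpow_le hx hy hm u)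
  refine mul_le_mul ?_ ?_ (norm_nonneg _) (Real.rpow_nonneg hx _)
  · simpa using norm_posPow_le hx (1 / 2)
  · simpa using norm_posPow_le hy (((m - 1) / u : ℝ) / 2 : ℂ)

lemma norm_trace_le_interp {Φ : ℂ → Matrix n n ℂ} (hΦ : Differentiable ℂ Φ)
    (h_bdd : BddAbove ((norm ∘ Φ) '' verticalClosedStrip 0 1)) {M₀ M₁ : ℝ}
    (h₀ : ∀ z : ℂ, z.re = 0 → ‖(Φ z).trace‖ ≤ M₀) (h₁ : ∀ z : ℂ, z.re = 1 → ‖(Φ z).trace‖ ≤ M₁)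
    {u : ℝ} (hu₀ : 0 ≤ u) (hu₁ : u ≤ 1) : ‖(Φ u).trace‖ ≤ M₀ ^ (1 - u) * M₁ ^ u := by
  let τ := (traceLinearMap n ℂ ℂ).toContinuousLinearMap
  have h_bdd_trace : BddAbove ((norm ∘ τ ∘ Φ) '' verticalClosedStrip 0 1) := by
    obtain ⟨C, hC⟩ := h_bdd
    refine ⟨‖τ‖ * C, Set.forall_mem_image.2 fun z hz => (τ.le_opNorm _).trans ?_⟩
    exact mul_le_mul_of_nonneg_left (hC (Set.mem_image_of_mem _ hz)) (norm_nonneg τ)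
  have h_strip : (u : ℂ) ∈ verticalClosedStrip 0 1 := by simp [verticalClosedStrip, hu₀, hu₁]
  exact Complex.HadamardThreeLines.norm_le_interp_of_mem_verticalClosedStrip₀₁' _ h_strip
    (τ.differentiable.comp hΦ).diffContOnCl h_bdd_trace (fun z hz => h₀ z hz) (fun z hz => h₁ z hz)

/-- The analytic family `A ^ (d z) * B ^ (c z) * |K| ^ ((m - z) / u) * Vᴴ`, whose trace is
interpolated between `z = 0` and `z = 1` to prove the Araki–Lieb–Thirring inequality. It is used
with `K = A ^ (d u) * B ^ (c u) = V * |K|`, for which the trace at `z = u` is `tr |K| ^ (m / u)`. -/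
noncomputable def altFamily (hA : A.PosSemidef) (hB : B.PosSemidef) (d c m u : ℝ)
    (K V : Matrix n n ℂ) (z : ℂ) : Matrix n n ℂ :=
  psdPow hA (d * z) * psdPow hB (c * z) * absPow K ((m - z) / u) * Vᴴ

variable (hA : A.PosSemidef) (hB : B.PosSemidef) (d c m u : ℝ) (K : Matrix n n ℂ)
  {V : Matrix n n ℂ}

lemma differentiable_altFamily : Differentiable ℂ (altFamily hA hB d c m u K V) := by
  have hAz : Differentiable ℂ fun z : ℂ => psdPow hA (d * z) :=
    (differentiable_psdPow hA).comp (differentiable_id.const_mul _)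
  have hBz : Differentiable ℂ fun z : ℂ => psdPow hB (c * z) :=
    (differentiable_psdPow hB).comp (differentiable_id.const_mul _)
  have hKz : Differentiable ℂ fun z : ℂ => absPow K ((m - z) / u) :=
    (differentiable_absPow K).comp ((differentiable_id.const_sub _).div_const _)
  exact ((hAz.mul hBz).mul hKz).mul_const _

lemma norm_altFamily_le (z : ℂ) : ‖altFamily hA hB d c m u K V z‖ ≤
    ‖psdPow hA (d * z.re)‖ * ‖psdPow hB (c * z.re)‖ * ‖absPow K ((m - z.re) / u)‖ * ‖Vᴴ‖ := by
  have hAz : ‖psdPow hA (d * z)‖ = ‖psdPow hA (d * z.re)‖ := by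
    rw [norm_psdPow hA (d * z), Complex.re_ofReal_mul, Complex.ofReal_mul]
  have hBz : ‖psdPow hB (c * z)‖ = ‖psdPow hB (c * z.re)‖ := by
    rw [norm_psdPow hB (c * z), Complex.re_ofReal_mul, Complex.ofReal_mul]
  have hKz : ‖absPow K ((m - z) / u)‖ = ‖absPow K ((m - z.re) / u)‖ := by
    rw [norm_absPow K ((m - z) / u), Complex.div_ofReal_re, Complex.sub_re, Complex.ofReal_re,
      Complex.ofReal_div, Complex.ofReal_sub]
  rw [← hAz, ← hBz, ← hKz]
  exact norm_mul_le_of_le (norm_mul₃_le ..) le_rfl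

lemma bddAbove_norm_altFamily :
    BddAbove ((norm ∘ altFamily hA hB d c m u K V) '' verticalClosedStrip 0 1) := by
  have h_cont : Continuous fun x : ℝ => ‖psdPow hA (d * x)‖ * ‖psdPow hB (c * x)‖ *
      ‖absPow K ((m - x) / u)‖ * ‖Vᴴ‖ := by
    have hA' := (differentiable_psdPow hA).continuous
    have hB' := (differentiable_psdPow hB).continuous
    have hK' := (differentiable_absPow K).continuous
    fun_prop
  obtain ⟨C, hC⟩ := isCompact_Icc.bddAbove_image (K := Set.Icc (0 : ℝ) 1) h_cont.continuousOn
  refine ⟨C, Set.forall_mem_image.2 fun z hz => ?_⟩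
  exact (norm_altFamily_le hA hB d c m u K z).trans (hC (Set.mem_image_of_mem _ hz))

lemma norm_trace_altFamily_le_of_re_eq_zero (hV : ‖V‖ ≤ 1) {z : ℂ} (hz : z.re = 0) :
    ‖(altFamily hA hB d c m u K V z).trace‖ ≤ schattenPow (m / u) K := by
  have h_split : absPow K ((m - z) / u) = absPow K ((m / u : ℝ) : ℂ) * absPow K (-z / u) := by
    rw [absPow_mul_absPow, Complex.ofReal_div, ← add_div, sub_eq_add_neg]
  have h_cycle : (altFamily hA hB d c m u K V z).trace = (absPow K ((m / u : ℝ) : ℂ) *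
      (absPow K (-z / u) * Vᴴ * (psdPow hA (d * z) * psdPow hB (c * z)))).trace := by
    rw [altFamily, h_split, Matrix.mul_assoc _ _ Vᴴ, trace_mul_comm]
    simp only [Matrix.mul_assoc]
  rw [h_cycle]
  refine norm_trace_absPow_mul_le K _ ?_
  refine norm_mul_le_one (norm_mul_le_one (norm_absPow_le_one K ?_) ?_)
    (norm_mul_le_one (norm_psdPow_le_one hA ?_) (norm_psdPow_le_one hB ?_))
  · rw [Complex.div_ofReal_re, Complex.neg_re, hz, neg_zero, zero_div]
  · rwa [l2_opNorm_conjTranspose]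
  · rw [Complex.re_ofReal_mul, hz, mul_zero]
  · rw [Complex.re_ofReal_mul, hz, mul_zero]

variable {m} in
lemma norm_trace_altFamily_le_of_re_eq_one (hV : ‖V‖ ≤ 1) (hm : 1 ≤ m) {z : ℂ} (hz : z.re = 1) :
    ‖(altFamily hA hB d c m u K V z).trace‖ ≤
      1 / m * schattenPow m (psdPow hA d * psdPow hB c) + (1 - 1 / m) * schattenPow (m / u) K := by
  obtain ⟨V', hV', h_polar, -⟩ := exists_polar_decomposition (psdPow hA d * psdPow hB c)
  set L := psdPow hA d * psdPow hB c with hL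
  have hA_split : psdPow hA (d * z) = psdPow hA (d * (z - 1)) * psdPow hA d := by
    rw [psdPow_mul_psdPow, mul_sub, mul_one, sub_add_cancel]
  have hB_split : psdPow hB (c * z) = psdPow hB c * psdPow hB (c * (z - 1)) := by
    rw [psdPow_mul_psdPow, mul_sub, mul_one, add_sub_cancel]
  have hK_split : absPow K ((m - z) / u) =
      absPow K ((m - 1) / u : ℝ) * absPow K (-(z - 1) / u) := by
    rw [absPow_mul_absPow]
    congr 1
    push_cast
    ring
  have h_cycle : (altFamily hA hB d c m u K V z).trace =
      (absPow L 1 * psdPow hB (c * (z - 1)) * absPow K ((m - 1) / u : ℝ) *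
        (absPow K (-(z - 1) / u) * Vᴴ * (psdPow hA (d * (z - 1)) * V'))).trace := by
    have h_prod : psdPow hA (d * z) * psdPow hB (c * z) =
        psdPow hA (d * (z - 1)) * V' * (absPow L 1 * psdPow hB (c * (z - 1))) := by
      rw [hA_split, hB_split, Matrix.mul_assoc, ← Matrix.mul_assoc (psdPow hA d), ← hL]
      nth_rw 1 [← h_polar]
      simp only [Matrix.mul_assoc]
    rw [altFamily, h_prod, hK_split, Matrix.mul_assoc, Matrix.mul_assoc, trace_mul_comm]
    simp only [Matrix.mul_assoc]
  rw [h_cycle]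
  refine norm_trace_absPow_mul_mul_absPow_mul_le hm u (norm_psdPow_le_one hB ?_)
    (norm_mul_le_one (norm_mul_le_one (norm_absPow_le_one K ?_) ?_)
      (norm_mul_le_one (norm_psdPow_le_one hA ?_) hV'))
  · rw [Complex.re_ofReal_mul, Complex.sub_re, hz, Complex.one_re, sub_self, mul_zero]
  · rw [Complex.div_ofReal_re, Complex.neg_re, Complex.sub_re, hz, Complex.one_re, sub_self,
      neg_zero, zero_div]
  · rwa [l2_opNorm_conjTranspose]
  · rw [Complex.re_ofReal_mul, Complex.sub_re, hz, Complex.one_re, sub_self, mul_zero]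

lemma le_of_le_rpow_mul_rpow {T S w u : ℝ} (hT : 0 ≤ T) (hS : 0 ≤ S) (hw : 0 < w) (hw1 : w ≤ 1)
    (hu : 0 < u) (h : T ≤ T ^ (1 - u) * (w * S + (1 - w) * T) ^ u) : T ≤ S := by
  obtain rfl | hT' := hT.eq_or_lt
  · exact hS
  have h_mean : 0 ≤ w * S + (1 - w) * T :=
    add_nonneg (mul_nonneg hw.le hS) (mul_nonneg (sub_nonneg.2 hw1) hT)
  rw [Real.rpow_sub hT', Real.rpow_one, div_mul_eq_mul_div, le_div_iff₀ (by positivity),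
    mul_le_mul_iff_right₀ hT', Real.rpow_le_rpow_iff hT h_mean hu] at h
  exact le_of_mul_le_mul_left (by linarith) hw

variable {m u} in
lemma schattenPow_psdPow_mul_psdPow_le (hm : 1 ≤ m) (hu : 0 < u) (hu1 : u ≤ 1) :
    schattenPow (m / u) (psdPow hA (d * u) * psdPow hB (c * u)) ≤
      schattenPow m (psdPow hA d * psdPow hB c) := by
  set K := psdPow hA (d * u) * psdPow hB (c * u) with hK
  obtain ⟨V, hV, -, h_polar⟩ := exists_polar_decomposition K
  have hm_pos : 0 < m := by linarith
  have h_value : (altFamily hA hB d c m u K V u).trace = schattenPow (m / u) K := by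
    rw [← trace_absPow_ofReal K (div_pos hm_pos hu).ne', altFamily, ← hK, trace_mul_comm,
      ← Matrix.mul_assoc, h_polar, absPow_mul_absPow]
    congr 2
    push_cast
    field_simp
    ring
  have h_interp := norm_trace_le_interp (differentiable_altFamily hA hB d c m u K)
    (bddAbove_norm_altFamily hA hB d c m u K)
    (fun z hz => norm_trace_altFamily_le_of_re_eq_zero hA hB d c m u K hV hz)
    (fun z hz => norm_trace_altFamily_le_of_re_eq_one hA hB d c u K hV hm hz) hu.le hu1
  rw [h_value, Complex.norm_of_nonneg (schattenPow_nonneg K _)] at h_interp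
  exact le_of_le_rpow_mul_rpow (schattenPow_nonneg K _) (schattenPow_nonneg _ m)
    (one_div_pos.2 hm_pos) ((div_le_one hm_pos).2 hm) hu h_interp

end ArakiLiebThirring

section Overlap

/-- The squared moduli of the inner products of the eigenvectors of `A` with those of `B`. As a
weight on pairs of eigenvalues they turn traces of products of functions of `A` and of `B` into
commutative double sums. -/
noncomputable def overlap (hA : A.IsHermitian) (hB : B.IsHermitian) (i j : n) : ℝ :=
  ‖((hA.eigenvectorUnitary : Matrix n n ℂ)ᴴ * hB.eigenvectorUnitary) i j‖ ^ 2

lemma overlap_nonneg (hA : A.IsHermitian) (hB : B.IsHermitian) (i j : n) : 0 ≤ overlap hA hB i j :=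
  sq_nonneg _

lemma overlap_comm (hA : A.IsHermitian) (hB : B.IsHermitian) (i j : n) :
    overlap hA hB i j = overlap hB hA j i := by
  rw [overlap, overlap, ← norm_star, ← conjTranspose_apply, conjTranspose_mul,
    conjTranspose_conjTranspose]

lemma trace_hermCalc_mul_hermCalc (hA : A.IsHermitian) (hB : B.IsHermitian) (f g : ℝ → ℂ) :
    (hermCalc hA f * hermCalc hB g).trace =
      ∑ i, ∑ j, f (hA.eigenvalues i) * g (hB.eigenvalues j) * overlap hA hB i j := by
  have h := trace_hermCalc_mul_mul_hermCalc_mul hA hB f g 1 1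
  simp only [Matrix.mul_one] at h
  rw [h]
  refine Finset.sum_congr rfl fun i _ => Finset.sum_congr rfl fun j _ => ?_
  have h_adjoint : ((hB.eigenvectorUnitary : Matrix n n ℂ)ᴴ * hA.eigenvectorUnitary) j i =
      star (((hA.eigenvectorUnitary : Matrix n n ℂ)ᴴ * hB.eigenvectorUnitary) i j) := by
    rw [← conjTranspose_apply, conjTranspose_mul, conjTranspose_conjTranspose]
  rw [h_adjoint, Complex.star_def, Complex.mul_conj', overlap, Complex.ofReal_pow]

lemma sum_overlap_right (hA : A.IsHermitian) (hB : B.IsHermitian) (i : n) :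
    ∑ j, overlap hA hB i j = 1 := by
  set W := (hA.eigenvectorUnitary : Matrix n n ℂ)ᴴ * hB.eigenvectorUnitary with hW
  have h_unitary : W * Wᴴ = 1 :=
    mem_unitaryGroup_iff.1 (star hA.eigenvectorUnitary * hB.eigenvectorUnitary).2
  have h_entry : ∑ j, W i j * Wᴴ j i = 1 := by
    rw [← Matrix.mul_apply, h_unitary, one_apply_eq]
  simp only [conjTranspose_apply, Complex.star_def, Complex.mul_conj'] at h_entry
  simp only [overlap, ← hW]
  exact_mod_cast h_entry

lemma sum_overlap_left (hA : A.IsHermitian) (hB : B.IsHermitian) (j : n) :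
    ∑ i, overlap hA hB i j = 1 := by
  simp only [overlap_comm hA hB, sum_overlap_right]

variable (hA : A.PosSemidef) (hB : B.PosSemidef)

lemma trace_psdPow_mul {s : ℝ} (hs : s ≠ 0) :
    (psdPow hA s * B).trace.re =
      ∑ i, ∑ j, overlap hA.1 hB.1 i j * (hA.1.eigenvalues i ^ s * hB.1.eigenvalues j) := by
  have h := trace_hermCalc_mul_hermCalc hA.1 hB.1 (posPow s) (fun x => (x : ℂ))
  simp only [hermCalc_ofReal, posPow_ofReal (hA.eigenvalues_nonneg _) hs] at h
  rw [psdPow, h]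
  norm_cast
  exact Finset.sum_congr rfl fun i _ => Finset.sum_congr rfl fun j _ => mul_comm ..

lemma overlap_mul_eigenvalues_eq_zero (hAB : psdPow hA 0 * B = B) {i : n}
    (hi : hA.1.eigenvalues i = 0) (j : n) : overlap hA.1 hB.1 i j * hB.1.eigenvalues j = 0 := by
  let χ : ℝ → ℝ := fun x => if x = 0 then 1 else 0
  have hχ_nonneg (x : ℝ) : 0 ≤ χ x := by positivity
  have hχ_mul : (fun x => (χ x : ℂ)) * posPow 0 = 0 := by
    ext x
    by_cases hx : x = 0 <;> simp [χ, posPow, hx]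
  have h_zero : hermCalc hA.1 (fun x => (χ x : ℂ)) * B = 0 := by
    rw [← hAB, psdPow, ← Matrix.mul_assoc, ← map_mul, hχ_mul, map_zero, Matrix.zero_mul]
  have h_sum := trace_hermCalc_mul_hermCalc hA.1 hB.1 (fun x => (χ x : ℂ)) (fun x => (x : ℂ))
  rw [hermCalc_ofReal, h_zero, trace_zero] at h_sum
  norm_cast at h_sum
  have h_term_nonneg (i j : n) :
      0 ≤ χ (hA.1.eigenvalues i) * hB.1.eigenvalues j * overlap hA.1 hB.1 i j :=
    mul_nonneg (mul_nonneg (hχ_nonneg _) (hB.eigenvalues_nonneg j)) (overlap_nonneg ..)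
  have h_row := (Fintype.sum_eq_zero_iff_of_nonneg fun i =>
    Finset.sum_nonneg fun j _ => h_term_nonneg i j).1 h_sum.symm
  have h_entry := (Fintype.sum_eq_zero_iff_of_nonneg (h_term_nonneg i)).1 (congrFun h_row i)
  simpa [χ, hi, mul_comm] using congrFun h_entry j

lemma sum_sum_overlap_mul_left :
    ∑ i, ∑ j, overlap hA.1 hB.1 i j * hA.1.eigenvalues i = A.trace.re := by
  simp only [← Finset.sum_mul, sum_overlap_right, one_mul, hA.1.trace_eq_sum_eigenvalues]
  norm_cast

lemma sum_sum_overlap_mul_right (f : ℝ → ℝ) :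
    ∑ i, ∑ j, overlap hA.1 hB.1 i j * f (hB.1.eigenvalues j) = ∑ j, f (hB.1.eigenvalues j) := by
  rw [Finset.sum_comm]
  simp only [← Finset.sum_mul, sum_overlap_left, one_mul]

lemma re_trace_psdPow_mul_le {α : ℝ} (hα : 1 < α) :
    (psdPow hA (1 - 1 / α : ℝ) * B).trace.re ≤
      A.trace.re ^ (1 - 1 / α) * (∑ j, hB.1.eigenvalues j ^ α) ^ (1 / α) := by
  have hα_pos : 0 < α := by linarith
  have h_exp : 1 - 1 / α ≠ 0 := (sub_pos.2 ((div_lt_one hα_pos).2 hα)).ne'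
  rw [trace_psdPow_mul hA hB h_exp, ← sum_sum_overlap_mul_left hA hB,
    ← sum_sum_overlap_mul_right hA hB (· ^ α)]
  set a := hA.1.eigenvalues
  set b := hB.1.eigenvalues
  have ha (i : n) : 0 ≤ a i := hA.eigenvalues_nonneg i
  have hb (j : n) : 0 ≤ b j := hB.eigenvalues_nonneg j
  have h_holder := Real.inner_le_weight_mul_Lp_of_nonneg Finset.univ hα.le
    (fun k : n × n => overlap hA.1 hB.1 k.1 k.2 * a k.1) (fun k => a k.1 ^ (-(1 / α)) * b k.2)
    (fun k => mul_nonneg (overlap_nonneg ..) (ha _))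
    (fun k => mul_nonneg (Real.rpow_nonneg (ha _) _) (hb _))
  have h_left (i j : n) : overlap hA.1 hB.1 i j * (a i ^ (1 - 1 / α) * b j) =
      overlap hA.1 hB.1 i j * a i * (a i ^ (-(1 / α)) * b j) := by
    rw [sub_eq_add_neg, Real.rpow_add' (ha i) (by rwa [← sub_eq_add_neg]), Real.rpow_one]
    ring
  have h_right (i j : n) : overlap hA.1 hB.1 i j * a i * (a i ^ (-(1 / α)) * b j) ^ α ≤
      overlap hA.1 hB.1 i j * b j ^ α := by
    rw [Real.mul_rpow (Real.rpow_nonneg (ha i) _) (hb j), ← Real.rpow_mul (ha i), neg_mul,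
      one_div_mul_cancel hα_pos.ne', Real.rpow_neg_one, mul_assoc, ← mul_assoc (a i)]
    exact mul_le_mul_of_nonneg_left
      (mul_le_of_le_one_left (Real.rpow_nonneg (hb j) _) (mul_inv_le_one ..)) (overlap_nonneg ..)
  simp only [Fintype.sum_prod_type, ← one_div] at h_holder
  simp only [h_left]
  have hw (i j : n) : 0 ≤ overlap hA.1 hB.1 i j * a i := mul_nonneg (overlap_nonneg ..) (ha i)
  refine h_holder.trans (mul_le_mul_of_nonneg_left (Real.rpow_le_rpow ?_ ?_ (by positivity)) ?_)
  · exact Finset.sum_nonneg fun i _ => Finset.sum_nonneg fun j _ => mul_nonneg (hw i j)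
      (Real.rpow_nonneg (mul_nonneg (Real.rpow_nonneg (ha i) _) (hb j)) _)
  · exact Finset.sum_le_sum fun i _ => Finset.sum_le_sum fun j _ => h_right i j
  · exact Real.rpow_nonneg (Finset.sum_nonneg fun i _ => Finset.sum_nonneg fun j _ => hw i j) _

lemma sum_eigenvalues_rpow_le (hAB : psdPow hA 0 * B = B) {α : ℝ} (hα : 0 < α) (hα1 : α < 1) :
    ∑ j, hB.1.eigenvalues j ^ α ≤
      A.trace.re ^ (1 - α) * (psdPow hA (1 - 1 / α : ℝ) * B).trace.re ^ α := by
  have h_exp : 1 - 1 / α ≠ 0 := (sub_neg.2 ((one_lt_div hα).2 hα1)).ne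
  rw [trace_psdPow_mul hA hB h_exp, ← sum_sum_overlap_mul_left hA hB,
    ← sum_sum_overlap_mul_right hA hB (· ^ α)]
  set a := hA.1.eigenvalues
  set b := hB.1.eigenvalues
  have ha (i : n) : 0 ≤ a i := hA.eigenvalues_nonneg i
  have hb (j : n) : 0 ≤ b j := hB.eigenvalues_nonneg j
  have h_holder := Real.inner_le_weight_mul_Lp_of_nonneg Finset.univ
    ((one_le_inv₀ hα).2 hα1.le)
    (fun k : n × n => overlap hA.1 hB.1 k.1 k.2 * a k.1) (fun k => (a k.1)⁻¹ * b k.2 ^ α)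
    (fun k => mul_nonneg (overlap_nonneg ..) (ha _))
    (fun k => mul_nonneg (inv_nonneg.2 (ha _)) (Real.rpow_nonneg (hb _) _))
  have h_left (i j : n) : overlap hA.1 hB.1 i j * b j ^ α =
      overlap hA.1 hB.1 i j * a i * ((a i)⁻¹ * b j ^ α) := by
    by_cases hi : a i = 0
    · obtain h | h := mul_eq_zero.1 (overlap_mul_eigenvalues_eq_zero hA hB hAB hi j)
      · simp only [h, zero_mul]
      · change b j = 0 at h
        simp only [h, Real.zero_rpow hα.ne', mul_zero]
    · rw [mul_assoc, mul_inv_cancel_left₀ hi]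
  have h_right (i j : n) : overlap hA.1 hB.1 i j * (a i ^ (1 - 1 / α) * b j) =
      overlap hA.1 hB.1 i j * a i * ((a i)⁻¹ * b j ^ α) ^ α⁻¹ := by
    rw [Real.mul_rpow (inv_nonneg.2 (ha i)) (Real.rpow_nonneg (hb j) _),
      Real.rpow_rpow_inv (hb j) hα.ne', Real.inv_rpow (ha i), ← Real.rpow_neg (ha i), mul_assoc,
      ← mul_assoc (a i), sub_eq_add_neg, Real.rpow_add' (ha i) (by rwa [← sub_eq_add_neg]),
      Real.rpow_one, one_div]
  simp only [Fintype.sum_prod_type, inv_inv] at h_holder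
  simpa only [h_left, h_right] using h_holder

lemma sum_eigenvalues_gram_rpow (K : Matrix n n ℂ) (α : ℝ) :
    ∑ j, (posSemidef_conjTranspose_mul_self Kᴴ).1.eigenvalues j ^ α = schattenPow (2 * α) K := by
  rw [← schattenPow_conjTranspose, schattenPow, mul_div_cancel_left₀ α two_ne_zero]

lemma schattenPow_two_psdPow_mul (α : ℝ) (M : Matrix n n ℂ) :
    schattenPow 2 (psdPow hA ((2 - 1 / α) / 2 : ℝ) * M) =
      (psdPow hA (1 - 1 / α : ℝ) *
        ((psdPow hA (1 / 2 : ℝ) * M)ᴴᴴ * (psdPow hA (1 / 2 : ℝ) * M)ᴴ)).trace.re := by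
  have h_left : psdPow hA ((2 - 1 / α) / 2 : ℝ) * psdPow hA ((2 - 1 / α) / 2 : ℝ) =
      psdPow hA (1 / 2 : ℝ) * psdPow hA (1 - 1 / α : ℝ) * psdPow hA (1 / 2 : ℝ) := by
    simp only [psdPow_mul_psdPow]
    congr 1
    push_cast
    ring
  have h_cycle : ((psdPow hA ((2 - 1 / α) / 2 : ℝ) * M)ᴴ *
      (psdPow hA ((2 - 1 / α) / 2 : ℝ) * M)).trace =
        (psdPow hA ((2 - 1 / α) / 2 : ℝ) * psdPow hA ((2 - 1 / α) / 2 : ℝ) * (M * Mᴴ)).trace := by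
    rw [conjTranspose_mul, conjTranspose_psdPow_ofReal, Matrix.mul_assoc, trace_mul_comm]
    simp only [Matrix.mul_assoc]
  rw [← Complex.ofReal_re (schattenPow _ _), schattenPow_two, h_cycle, h_left,
    conjTranspose_conjTranspose, conjTranspose_mul, conjTranspose_psdPow_ofReal]
  simp only [Matrix.mul_assoc]
  rw [trace_mul_comm]
  simp only [Matrix.mul_assoc]

lemma schattenPow_two_psdPow_mul_le {α : ℝ} (hα : 1 < α) (M : Matrix n n ℂ) :
    schattenPow 2 (psdPow hA ((2 - 1 / α) / 2 : ℝ) * M) ≤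
      A.trace.re ^ (1 - 1 / α) * schattenPow (2 * α) (psdPow hA (1 / 2 : ℝ) * M) ^ (1 / α) := by
  rw [schattenPow_two_psdPow_mul, ← sum_eigenvalues_gram_rpow]
  exact re_trace_psdPow_mul_le hA (posSemidef_conjTranspose_mul_self _) hα

lemma schattenPow_psdPow_mul_le {α : ℝ} (hα : 0 < α) (hα1 : α < 1) (M : Matrix n n ℂ) :
    schattenPow (2 * α) (psdPow hA (1 / 2 : ℝ) * M) ≤
      A.trace.re ^ (1 - α) * schattenPow 2 (psdPow hA ((2 - 1 / α) / 2 : ℝ) * M) ^ α := by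
  rw [schattenPow_two_psdPow_mul, ← sum_eigenvalues_gram_rpow]
  refine sum_eigenvalues_rpow_le hA (posSemidef_conjTranspose_mul_self _) ?_ hα hα1
  rw [conjTranspose_conjTranspose, ← Matrix.mul_assoc, ← Matrix.mul_assoc, psdPow_mul_psdPow,
    zero_add]

end Overlap

section Divergence

variable {ρ σ : Matrix n n ℂ} (hρ : ρ.PosSemidef) (hσ : σ.PosSemidef)

include hρ hσ

lemma schattenPow_two_psdPow_mul_psdPow (s t : ℝ) :
    schattenPow 2 (psdPow hρ (s / 2 : ℝ) * psdPow hσ (t / 2 : ℝ)) =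
      (psdPow hρ s * psdPow hσ t).trace.re := by
  have hs : psdPow hρ s = psdPow hρ (s / 2 : ℝ) * psdPow hρ (s / 2 : ℝ) := by
    rw [psdPow_mul_psdPow, ← Complex.ofReal_add, add_halves]
  have ht : psdPow hσ t = psdPow hσ (t / 2 : ℝ) * psdPow hσ (t / 2 : ℝ) := by
    rw [psdPow_mul_psdPow, ← Complex.ofReal_add, add_halves]
  rw [← Complex.ofReal_re (schattenPow _ _), schattenPow_two, conjTranspose_mul,
    conjTranspose_psdPow_ofReal, conjTranspose_psdPow_ofReal, hs, ht, Matrix.mul_assoc,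
    trace_mul_comm]
  simp only [Matrix.mul_assoc]

lemma psdPow_mul_psdPow_ne_zero (h_ne : ρ * σ ≠ 0) (z w : ℂ) :
    psdPow hρ z * psdPow hσ w ≠ 0 := by
  intro h_zero
  apply h_ne
  calc ρ * σ = psdPow hρ (1 - z) * (psdPow hρ z * psdPow hσ w) * psdPow hσ (1 - w) := by
        rw [← Matrix.mul_assoc, psdPow_mul_psdPow, Matrix.mul_assoc, psdPow_mul_psdPow,
          sub_add_cancel, add_sub_cancel, psdPow_one, psdPow_one]
    _ = 0 := by rw [h_zero, Matrix.mul_zero, Matrix.zero_mul]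

lemma renyiDiv_eq_log_schattenPow (α : ℝ) :
    renyiDiv α ρ σ = (α - 1)⁻¹ *
      Real.log (schattenPow 2 (psdPow hρ (α / 2 : ℝ) * psdPow hσ ((1 - α) / 2 : ℝ))) := by
  rw [renyiDiv, schattenPow_two_psdPow_mul_psdPow, matRpow_eq_psdPow hρ, matRpow_eq_psdPow hσ]

lemma sandwichedRenyiDiv_eq_log_schattenPow {α : ℝ} (hα : α ≠ 0) :
    sandwichedRenyiDiv α ρ σ = (α - 1)⁻¹ * Real.log
      (schattenPow (2 * α) (psdPow hρ (1 / 2 : ℝ) * psdPow hσ ((1 - α) / (2 * α) : ℝ))) := by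
  set K := psdPow hρ (1 / 2 : ℝ) * psdPow hσ ((1 - α) / (2 * α) : ℝ) with hK
  have h_gram : psdPow hσ ((1 - α) / (2 * α) : ℝ) * ρ * psdPow hσ ((1 - α) / (2 * α) : ℝ) =
      Kᴴ * K := by
    have h_sqrt : ρ = psdPow hρ (1 / 2 : ℝ) * psdPow hρ (1 / 2 : ℝ) := by
      rw [psdPow_mul_psdPow, ← Complex.ofReal_add, add_halves, Complex.ofReal_one, psdPow_one]
    rw [hK, conjTranspose_mul, conjTranspose_psdPow_ofReal, conjTranspose_psdPow_ofReal]
    nth_rw 1 [h_sqrt]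
    simp only [Matrix.mul_assoc]
  rw [sandwichedRenyiDiv, matRpow_eq_psdPow hσ, h_gram,
    matRpow_eq_psdPow (posSemidef_conjTranspose_mul_self K), trace_psdPow_ofReal _ hα,
    Complex.ofReal_re, schattenPow, mul_div_cancel_left₀ α two_ne_zero]

theorem sandwichedRenyiDiv_le_renyiDiv (h_ne : ρ * σ ≠ 0) {α : ℝ} (hα : 1 / 2 ≤ α) (hα1 : α ≠ 1) :
    sandwichedRenyiDiv α ρ σ ≤ renyiDiv α ρ σ := by
  have hα_pos : 0 < α := by linarith
  rw [sandwichedRenyiDiv_eq_log_schattenPow hρ hσ hα_pos.ne', renyiDiv_eq_log_schattenPow hρ hσ]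
  obtain hα1 | hα1 := lt_or_gt_of_ne hα1
  · have h_alt := schattenPow_psdPow_mul_psdPow_le hρ hσ (1 / 2) ((1 - α) / (2 * α))
      (m := 2 * α) (by linarith) hα_pos hα1.le
    have h_exp : (1 - α) / (2 * α) * α = (1 - α) / 2 := by field_simp
    rw [← Complex.ofReal_mul, ← Complex.ofReal_mul, h_exp, one_div_mul_eq_div,
      mul_div_cancel_right₀ _ hα_pos.ne'] at h_alt
    exact mul_le_mul_of_nonpos_left
      (Real.log_le_log (schattenPow_pos _ _ (psdPow_mul_psdPow_ne_zero hρ hσ h_ne _ _)) h_alt)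
      (inv_nonpos.2 (by linarith))
  · have h_alt := schattenPow_psdPow_mul_psdPow_le hρ hσ (α / 2) ((1 - α) / 2) one_le_two
      (one_div_pos.2 hα_pos) ((div_le_one hα_pos).2 hα1.le)
    have hρ_exp : α / 2 * (1 / α) = 1 / 2 := by field_simp
    have hσ_exp : (1 - α) / 2 * (1 / α) = (1 - α) / (2 * α) := by field_simp
    rw [← Complex.ofReal_mul, ← Complex.ofReal_mul, hρ_exp, hσ_exp, div_div_eq_mul_div,
      div_one] at h_alt
    exact mul_le_mul_of_nonneg_left
      (Real.log_le_log (schattenPow_pos _ _ (psdPow_mul_psdPow_ne_zero hρ hσ h_ne _ _)) h_alt)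
      (inv_nonneg.2 (by linarith))

theorem renyiDiv_le_sandwichedRenyiDiv (hρ1 : ρ.trace = 1) (h_ne : ρ * σ ≠ 0) {α : ℝ} (hα : 0 < α)
    (hα1 : α ≠ 1) : renyiDiv (2 - 1 / α) ρ σ ≤ sandwichedRenyiDiv α ρ σ := by
  rw [sandwichedRenyiDiv_eq_log_schattenPow hρ hσ hα.ne', renyiDiv_eq_log_schattenPow hρ hσ]
  have h_exp : (1 - (2 - 1 / α)) / 2 = (1 - α) / (2 * α) := by
    field_simp
    ring
  have h_factor : (2 - 1 / α - 1)⁻¹ = (α - 1)⁻¹ * α := by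
    rw [sub_right_comm, show (2 : ℝ) - 1 = 1 by norm_num, one_sub_div hα.ne', inv_div,
      div_eq_inv_mul]
  rw [h_exp, h_factor, mul_assoc]
  set M := psdPow hσ ((1 - α) / (2 * α) : ℝ)
  have h_two_pos := schattenPow_pos (psdPow hρ ((2 - 1 / α) / 2 : ℝ) * M) 2
    (psdPow_mul_psdPow_ne_zero hρ hσ h_ne _ _)
  have h_pos := schattenPow_pos (psdPow hρ (1 / 2 : ℝ) * M) (2 * α)
    (psdPow_mul_psdPow_ne_zero hρ hσ h_ne _ _)
  obtain hα1 | hα1 := lt_or_gt_of_ne hα1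
  · have h_le := schattenPow_psdPow_mul_le hρ hα hα1 M
    rw [hρ1, Complex.one_re, Real.one_rpow, one_mul] at h_le
    have h_log := Real.log_le_log h_pos h_le
    rw [Real.log_rpow h_two_pos] at h_log
    exact mul_le_mul_of_nonpos_left h_log (inv_nonpos.2 (by linarith))
  · have h_le := schattenPow_two_psdPow_mul_le hρ hα1 M
    rw [hρ1, Complex.one_re, Real.one_rpow, one_mul] at h_le
    have h_log := Real.log_le_log h_two_pos h_le
    rw [Real.log_rpow h_pos, one_div_mul_eq_div, le_div_iff₀' hα] at h_log
    exact mul_le_mul_of_nonneg_left h_log (inv_nonneg.2 (by linarith))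

theorem sandwich_down_down_general (hρ1 : ρ.trace = 1) (h_ne : ρ * σ ≠ 0) {α : ℝ} (hα : 1 / 2 ≤ α)
    (hα1 : α ≠ 1) :
    -renyiDiv α ρ σ ≤ -sandwichedRenyiDiv α ρ σ ∧
      -sandwichedRenyiDiv α ρ σ ≤ -renyiDiv (2 - 1 / α) ρ σ :=
  ⟨neg_le_neg (sandwichedRenyiDiv_le_renyiDiv hρ hσ h_ne hα hα1),
    neg_le_neg (renyiDiv_le_sandwichedRenyiDiv hρ hσ hρ1 h_ne (by linarith) hα1)⟩

end Divergence

section PartialTrace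

variable {a b : Type*} [Fintype a] {ρ : Matrix (a × b) (a × b) ℂ}

lemma posSemidef_trFst (hρ : ρ.PosSemidef) : (trFst ρ).PosSemidef := by
  have h_sum : trFst ρ = ∑ i, ρ.submatrix (Prod.mk i) (Prod.mk i) := by
    ext j j'
    simp only [trFst, of_apply, Matrix.sum_apply, submatrix_apply]
  rw [h_sum]
  exact posSemidef_sum _ fun i _ => hρ.submatrix _

lemma trace_mul_one_kronecker [DecidableEq a] [Fintype b] (M : Matrix (a × b) (a × b) ℂ)
    (N : Matrix b b ℂ) : (M * ((1 : Matrix a a ℂ) ⊗ₖ N)).trace = (trFst M * N).trace := by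
  simp only [Matrix.trace, diag_apply, Matrix.mul_apply, trFst, of_apply, kroneckerMap_apply,
    Fintype.sum_prod_type, one_apply, ite_mul, one_mul, zero_mul, mul_ite, mul_zero,
    Finset.sum_ite_irrel, Finset.sum_const_zero, Finset.sum_ite_eq', Finset.mem_univ, if_true,
    Finset.sum_mul]
  rw [Finset.sum_comm]
  exact Finset.sum_congr rfl fun j _ => Finset.sum_comm

lemma trace_trFst [Fintype b] (M : Matrix (a × b) (a × b) ℂ) : (trFst M).trace = M.trace := by
  simp only [Matrix.trace, diag_apply, trFst, of_apply, Fintype.sum_prod_type]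
  exact Finset.sum_comm

lemma mul_one_kronecker_trFst_ne_zero [DecidableEq a] [Fintype b] (hρ : ρ.PosSemidef)
    (hρ_tr : ρ.trace ≠ 0) : ρ * ((1 : Matrix a a ℂ) ⊗ₖ trFst ρ) ≠ 0 := by
  intro h_zero
  have h_trace : ((trFst ρ)ᴴ * trFst ρ).trace = 0 := by
    rw [(posSemidef_trFst hρ).1.eq, ← trace_mul_one_kronecker, h_zero, trace_zero]
  apply hρ_tr
  rw [← trace_trFst, trace_conjTranspose_mul_self_eq_zero_iff.1 h_trace, trace_zero]

end PartialTrace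

end RenyiDivergence

theorem sandwich_down_down {a b : Type*} [Fintype a] [DecidableEq a] [Fintype b] [DecidableEq b]
    (ρ : Matrix (a × b) (a × b) ℂ) (hρ : ρ.PosSemidef) (hρ1 : ρ.trace = 1)
    (α : ℝ) (hα : (1 : ℝ) / 2 ≤ α) (hα1 : α ≠ 1) :
    -(renyiDiv α ρ ((1 : Matrix a a ℂ) ⊗ₖ trFst ρ)) ≤
        -(sandwichedRenyiDiv α ρ ((1 : Matrix a a ℂ) ⊗ₖ trFst ρ)) ∧
      -(sandwichedRenyiDiv α ρ ((1 : Matrix a a ℂ) ⊗ₖ trFst ρ)) ≤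
        -(renyiDiv (2 - 1 / α) ρ ((1 : Matrix a a ℂ) ⊗ₖ trFst ρ)) :=
  sandwich_down_down_general hρ (PosSemidef.one.kronecker (posSemidef_trFst hρ)) hρ1
    (mul_one_kronecker_trFst_ne_zero hρ (hρ1 ▸ one_ne_zero)) hα hα1
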